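/- Let G = GP(Γ, 𝒢) be a graph product of groups, let U, W ⊆ V(Γ), and let g ∈ G. Then there exist a subset P ⊆ U ∩ W and an element h ∈ G_W such that g G_U g⁻¹ ∩ G_W = h G_P h⁻¹. -/

import Mathlib

/-!
Retracting `g` onto `full W` and then onto `full U` gives `g = h * k * r` with `h ∈ full W`,
`r ∈ full U` and `k` killed by both retractions. Applying the retractions to `x = k * y * k⁻¹` with
`x ∈ full W` and `y ∈ full U` forces `x = y`, so the intersection is the conjugate by `h` of the
centralizer of `k` in `full (U ∩ W)`.

For such a centralizer, remove a vertex `v ∉ U ∩ W` from the support of `k`: centralizing `k` means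
centralizing both its image under the retraction onto `full {v}ᶜ`, which has smaller support, and
the remaining factor in the kernel of that retraction. The kernel is a free product of conjugates
of the vertex group of `v`, indexed by the cosets of the link subgroup of `v` and permuted by
`full {v}ᶜ`. An element of `full {v}ᶜ` therefore commutes with an element of the kernel exactly when
it fixes the finitely many cosets in its reduced word, and their stabilizers are conjugates of the
link subgroup by elements not involving `v`. This leaves only intersections of the original kind
with smaller support.
-/

section GraphProduct

variable {V : Type} [Fintype V] (Γ : SimpleGraph V) (Gv : V → Type) [∀ v, Group (Gv v)]

/-- The commutation relators defining a graph product: for each edge `{u, v}` of `Γ`,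
the elements of `G_u` commute with the elements of `G_v` inside the free product. -/
def graphProductRels : Set (Monoid.CoprodI Gv) :=
  {x | ∃ (u v : V), Γ.Adj u v ∧ ∃ (a : Gv u) (b : Gv v),
    x = Monoid.CoprodI.of a * Monoid.CoprodI.of b *
      (Monoid.CoprodI.of a)⁻¹ * (Monoid.CoprodI.of b)⁻¹}

/-- The graph product of the groups `Gv` over the finite simple graph `Γ`: the free
product of the vertex groups modulo commutation of adjacent vertex groups. -/
def GraphProduct : Type :=
  Monoid.CoprodI Gv ⧸ Subgroup.normalClosure (graphProductRels Γ Gv)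

instance : Group (GraphProduct Γ Gv) :=
  inferInstanceAs (Group (Monoid.CoprodI Gv ⧸ Subgroup.normalClosure (graphProductRels Γ Gv)))

/-- The canonical map of a vertex group into the graph product. -/
def GraphProduct.of (v : V) : Gv v →* GraphProduct Γ Gv :=
  (QuotientGroup.mk' _).comp Monoid.CoprodI.of

/-- The full subgroup on a set `S` of vertices: the subgroup generated by the vertex
groups of the vertices in `S`. -/
def GraphProduct.full (S : Set V) : Subgroup (GraphProduct Γ Gv) :=
  ⨆ v ∈ S, (GraphProduct.of Γ Gv v).range

/-- A graph product is non-degenerate if all vertex groups are nontrivial and `Γ` has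
more than one vertex. -/
def GraphProduct.NonDegenerate : Prop :=
  (∀ v, Nontrivial (Gv v)) ∧ Nontrivial V

/-- The conjugate `g H g⁻¹` of a subgroup. -/
def conjSubgroup {G : Type*} [Group G] (g : G) (H : Subgroup G) : Subgroup G :=
  H.map (MulAut.conj g).toMonoidHom

/-- Edge distance at least `n` between two vertices of a graph (with the convention
that vertices in different components are at infinite distance). -/
def SimpleGraph.distAtLeast (n : ℕ) (a b : V) : Prop :=
  a ≠ b ∧ (¬ Γ.Reachable a b ∨ n ≤ Γ.dist a b)

/-- Two vertices are separated (w.r.t. the graph product) if their edge distance is at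
least 2 and the full subgroup on the intersection of their links is finite. -/
def GraphProduct.SeparatedPair (a b : V) : Prop :=
  a ≠ b ∧ ¬ Γ.Adj a b ∧
    Finite (GraphProduct.full Γ Gv (Γ.neighborSet a ∩ Γ.neighborSet b))

/-- The graph-theoretic diameter of `Γ` is at least `n`. -/
def SimpleGraph.diamAtLeast (n : ℕ) : Prop := ∃ a b : V, Γ.distAtLeast n a b

end GraphProduct

/-- The free product of copies of `A` indexed by `X`, the target in which conjugates of a vertex
group are compared. -/
abbrev FreePower (X A : Type*) [Group A] : Type _ := Monoid.CoprodI fun _ : X => A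

namespace FreePower

open Monoid (CoprodI)

variable {X Y Z A : Type*} [Group A]

/-- The inclusion of the copy of `A` with index `x`. -/
abbrev of (x : X) : A →* FreePower X A := CoprodI.of (M := fun _ : X => A) (i := x)

/-- The homomorphism of free powers induced by a map of index sets. -/
def reindex (f : X → Y) : FreePower X A →* FreePower Y A :=
  CoprodI.lift fun x => of (f x)

theorem reindex_of (f : X → Y) (x : X) (a : A) : reindex f (of x a) = of (f x) a :=
  CoprodI.lift_of (fun x => of (f x)) a

theorem reindex_id (w : FreePower X A) : reindex id w = w :=
  DFunLike.congr_fun CoprodI.lift_of' w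

theorem reindex_reindex (f : Y → Z) (g : X → Y) (w : FreePower X A) :
    reindex f (reindex g w) = reindex (f ∘ g) w := by
  suffices (reindex f).comp (reindex g) = reindex (A := A) (f ∘ g) from DFunLike.congr_fun this w
  refine CoprodI.ext_hom _ _ fun x => MonoidHom.ext fun a => ?_
  simp only [MonoidHom.comp_apply, reindex_of, Function.comp_apply]

section Action

variable {G : Type*} [Group G] [MulAction G X]

instance : MulDistribMulAction G (FreePower X A) where
  smul g := reindex (g • ·)
  one_smul w := by
    change reindex ((1 : G) • ·) w = w
    simp only [one_smul, ← Function.id_def, reindex_id]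
  mul_smul g h w := by
    change reindex ((g * h) • ·) w = reindex (g • ·) (reindex (h • ·) w)
    simp only [reindex_reindex, mul_smul, Function.comp_def]
  smul_mul g := map_mul (reindex (g • ·))
  smul_one g := map_one (reindex (g • ·))

theorem smul_eq_reindex (g : G) (w : FreePower X A) : g • w = reindex (g • ·) w := rfl

theorem smul_of (g : G) (x : X) (a : A) : g • of x a = of (g • x) a :=
  reindex_of (g • ·) x a

end Action

section Support

open scoped Classical in
/-- The syllables of the reduced word of an element of a free power. -/
noncomputable def syllables (w : FreePower X A) : List (Σ _ : X, A) :=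
  (CoprodI.Word.equiv w).toList

theorem syllables_injective : Function.Injective (syllables (X := X) (A := A)) := by
  classical
  exact fun _ _ h => CoprodI.Word.equiv.injective (CoprodI.Word.ext h)

theorem syllables_prod (u : CoprodI.Word fun _ : X => A) : syllables u.prod = u.toList := by
  classical
  exact congrArg CoprodI.Word.toList (CoprodI.Word.equiv.apply_symm_apply u)

theorem syllables_reindex {f : X → Y} (hf : Function.Injective f) (w : FreePower X A) :
    syllables (reindex f w) = (syllables w).map (Sigma.map f fun _ => id) := by
  classical
  obtain ⟨u, rfl⟩ : ∃ u : CoprodI.Word fun _ : X => A, u.prod = w :=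
    CoprodI.Word.equiv.symm.surjective w
  let fu : CoprodI.Word fun _ : Y => A :=
    { toList := u.toList.map (Sigma.map f fun _ => id)
      ne_one := List.forall_mem_map.2 u.ne_one
      chain_ne := by
        rw [List.isChain_map]
        exact u.chain_ne.imp fun _ _ h => hf.ne h }
  have prod_fu : reindex f u.prod = fu.prod := by
    simp only [CoprodI.Word.prod, fu, map_list_prod, List.map_map]
    exact congrArg List.prod (List.map_congr_left fun s _ => reindex_of f s.1 s.2)
  rw [prod_fu, syllables_prod, syllables_prod]

open scoped Classical in
/-- The finite set of indices occurring in the reduced word of an element of a free power. -/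
noncomputable def support (w : FreePower X A) : Finset X :=
  ((syllables w).map Sigma.fst).toFinset

theorem mem_support {w : FreePower X A} {x : X} : x ∈ support w ↔ ∃ s ∈ syllables w, s.1 = x := by
  simp only [support, List.mem_toFinset, List.mem_map]

theorem reindex_eq_self_iff {f : X → X} (hf : Function.Injective f) (w : FreePower X A) :
    reindex f w = w ↔ ∀ x ∈ support w, f x = x := by
  rw [← syllables_injective.eq_iff, syllables_reindex hf]
  nth_rw 2 [← List.map_id (syllables w)]
  simp only [List.map_inj_left, mem_support, forall_exists_index, and_imp,
    forall_apply_eq_imp_iff₂]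
  refine forall₂_congr fun s _ => ?_
  simp [Sigma.map, Sigma.ext_iff]

theorem smul_eq_self_iff {G : Type*} [Group G] [MulAction G X] (g : G) (w : FreePower X A) :
    g • w = w ↔ ∀ x ∈ support w, g • x = x :=
  reindex_eq_self_iff (MulAction.injective g) w

/-- The subgroup of a free power generated by the copies of `A` with index in `I`, encoded as the
image of the free power over `I`. -/
def supportedOn (I : Set X) : Subgroup (FreePower X A) :=
  (reindex ((↑) : I → X)).range

theorem of_mem_supportedOn {I : Set X} {x : X} (hx : x ∈ I) (a : A) :
    of x a ∈ supportedOn I :=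
  ⟨of ⟨x, hx⟩ a, reindex_of ((↑) : I → X) _ a⟩

theorem support_subset_of_mem_supportedOn {I : Set X} {w : FreePower X A} (hw : w ∈ supportedOn I) :
    (support w : Set X) ⊆ I := by
  obtain ⟨w, rfl⟩ := hw
  intro x hx
  obtain ⟨s, hs, rfl⟩ := mem_support.1 hx
  rw [syllables_reindex Subtype.val_injective] at hs
  obtain ⟨t, -, rfl⟩ := List.mem_map.1 hs
  exact t.1.2

theorem smul_mem_supportedOn {G : Type*} [Group G] [MulAction G X] {I : Set X} {g : G}
    (hg : Set.MapsTo (g • ·) I I) {w : FreePower X A} (hw : w ∈ supportedOn I) :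
    g • w ∈ supportedOn I := by
  obtain ⟨w, rfl⟩ := hw
  refine ⟨reindex (hg.restrict _ _ _) w, ?_⟩
  rw [smul_eq_reindex, reindex_reindex, reindex_reindex]
  rfl

end Support

end FreePower

namespace GraphProduct

open Monoid (CoprodI)
open scoped Pointwise

variable {V : Type} {Γ : SimpleGraph V} {Gv : V → Type} [∀ v, Group (Gv v)]

section Basic

theorem commute_of {u v : V} (h : Γ.Adj u v) (a : Gv u) (b : Gv v) :
    Commute (of Γ Gv u a) (of Γ Gv v b) := by
  have relator_eq_one : QuotientGroup.mk' (Subgroup.normalClosure (graphProductRels Γ Gv))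
      (CoprodI.of a * CoprodI.of b * (CoprodI.of a)⁻¹ * (CoprodI.of b)⁻¹) = 1 :=
    (QuotientGroup.eq_one_iff _).2 (Subgroup.subset_normalClosure ⟨u, v, h, a, b, rfl⟩)
  simp only [map_mul, map_inv] at relator_eq_one
  exact mul_inv_eq_iff_eq_mul.1 (mul_inv_eq_one.1 relator_eq_one)

/-- The universal property of the graph product. -/
def lift {K : Type*} [Group K] (f : ∀ v, Gv v →* K)
    (hf : ∀ u v, Γ.Adj u v → ∀ a b, Commute (f u a) (f v b)) : GraphProduct Γ Gv →* K :=
  QuotientGroup.lift _ (CoprodI.lift f) <| show _ ≤ (CoprodI.lift f).ker by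
    refine Subgroup.normalClosure_le_normal ?_
    rintro _ ⟨u, v, h, a, b, rfl⟩
    simp [MonoidHom.mem_ker, (hf u v h a b).eq]

theorem lift_of {K : Type*} [Group K] (f : ∀ v, Gv v →* K)
    (hf : ∀ u v, Γ.Adj u v → ∀ a b, Commute (f u a) (f v b)) (v : V) (a : Gv v) :
    lift (Γ := Γ) f hf (of Γ Gv v a) = f v a :=
  CoprodI.lift_of f a

theorem hom_ext {K : Type*} [Group K] {f g : GraphProduct Γ Gv →* K}
    (h : ∀ v a, f (of Γ Gv v a) = g (of Γ Gv v a)) : f = g :=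
  QuotientGroup.monoidHom_ext _ <| CoprodI.ext_hom _ _ fun v => MonoidHom.ext (h v)

theorem of_mem_full {S : Set V} {v : V} (hv : v ∈ S) (a : Gv v) : of Γ Gv v a ∈ full Γ Gv S :=
  Subgroup.mem_iSup_of_mem v (Subgroup.mem_iSup_of_mem hv ⟨a, rfl⟩)

theorem full_le {S : Set V} {K : Subgroup (GraphProduct Γ Gv)}
    (h : ∀ v ∈ S, ∀ a, of Γ Gv v a ∈ K) : full Γ Gv S ≤ K :=
  iSup₂_le fun v hv => by
    rintro _ ⟨a, rfl⟩
    exact h v hv a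

theorem full_mono {S T : Set V} (h : S ⊆ T) : full Γ Gv S ≤ full Γ Gv T :=
  full_le fun _ hv a => of_mem_full (h hv) a

theorem full_univ : full Γ Gv Set.univ = ⊤ := by
  have mk_eq_lift : QuotientGroup.mk' (Subgroup.normalClosure (graphProductRels Γ Gv)) =
      CoprodI.lift (of Γ Gv) :=
    CoprodI.ext_hom _ _ fun v => (CoprodI.lift_comp_of (of Γ Gv) v).symm
  have lift_surjective : Function.Surjective (CoprodI.lift (of Γ Gv)) := fun x => by
    obtain ⟨y, rfl⟩ := QuotientGroup.mk'_surjective _ x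
    exact ⟨y, (DFunLike.congr_fun mk_eq_lift y).symm⟩
  calc full Γ Gv Set.univ = ⨆ v, (of Γ Gv v).range := iSup_univ
    _ = (CoprodI.lift (of Γ Gv)).range := (CoprodI.range_eq_iSup _ (of Γ Gv)).symm
    _ = ⊤ := MonoidHom.range_eq_top.2 lift_surjective

@[elab_as_elim]
theorem full_induction {S : Set V} {motive : ∀ x, x ∈ full Γ Gv S → Prop}
    (of : ∀ v (hv : v ∈ S) a, motive (of Γ Gv v a) (of_mem_full hv a))
    (one : motive 1 (one_mem _))
    (mul : ∀ x y hx hy, motive x hx → motive y hy → motive (x * y) (mul_mem hx hy))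
    {x : GraphProduct Γ Gv} (hx : x ∈ full Γ Gv S) : motive x hx := by
  have full_eq : full Γ Gv S = ⨆ v : S, (GraphProduct.of Γ Gv v).range := iSup_subtype'
  suffices ∀ hx' : x ∈ ⨆ v : S, (GraphProduct.of Γ Gv v).range, motive x (full_eq ▸ hx') from
    this (full_eq ▸ hx)
  clear hx
  intro hx'
  induction hx' using Subgroup.iSup_induction' with
  | hp v x hx =>
    obtain ⟨a, rfl⟩ := hx
    exact of v v.2 a
  | h1 => exact one
  | hmul x y _ _ ihx ihy => exact mul x y _ _ ihx ihy

theorem exists_finset_mem_full (x : GraphProduct Γ Gv) : ∃ S : Finset V, x ∈ full Γ Gv S := by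
  classical
  have hx : x ∈ full Γ Gv Set.univ := by
    rw [full_univ]
    exact Subgroup.mem_top x
  induction hx using full_induction with
  | of v _ a => exact ⟨{v}, of_mem_full (Finset.mem_coe.2 (Finset.mem_singleton_self v)) a⟩
  | one => exact ⟨∅, one_mem _⟩
  | mul x y _ _ hx hy =>
    obtain ⟨S, hS⟩ := hx
    obtain ⟨T, hT⟩ := hy
    exact ⟨S ∪ T, mul_mem (full_mono (Finset.coe_subset.2 Finset.subset_union_left) hS)
      (full_mono (Finset.coe_subset.2 Finset.subset_union_right) hT)⟩

end Basic

section Retraction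

open scoped Classical in
/-- The retraction of the graph product onto the full subgroup on `S`, killing all other vertex
groups. -/
noncomputable def ret (S : Set V) : GraphProduct Γ Gv →* GraphProduct Γ Gv :=
  lift (fun v => if v ∈ S then of Γ Gv v else 1) fun u v h a b => by
    by_cases hu : u ∈ S <;> by_cases hv : v ∈ S <;> simp [hu, hv, commute_of h]

theorem ret_of_mem {S : Set V} {v : V} (h : v ∈ S) (a : Gv v) :
    ret S (of Γ Gv v a) = of Γ Gv v a := by
  simp [ret, lift_of, h]

theorem ret_of_notMem {S : Set V} {v : V} (h : v ∉ S) (a : Gv v) : ret S (of Γ Gv v a) = 1 := by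
  simp [ret, lift_of, h]

theorem ret_eq_self {S : Set V} {x : GraphProduct Γ Gv} (hx : x ∈ full Γ Gv S) : ret S x = x := by
  have le_eqLocus : full Γ Gv S ≤ (ret S).eqLocus (MonoidHom.id _) :=
    full_le fun v hv a => ret_of_mem hv a
  exact le_eqLocus hx

theorem ret_mem_full_inter (S : Set V) {T : Set V} {x : GraphProduct Γ Gv} (hx : x ∈ full Γ Gv T) :
    ret S x ∈ full Γ Gv (S ∩ T) := by
  have le_comap : full Γ Gv T ≤ (full Γ Gv (S ∩ T)).comap (ret S) := full_le fun v hv a => by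
    rw [Subgroup.mem_comap]
    by_cases h : v ∈ S
    · rw [ret_of_mem h]
      exact of_mem_full (Set.mem_inter h hv) a
    · rw [ret_of_notMem h]
      exact one_mem _
  exact le_comap hx

theorem ret_ret (S T : Set V) (x : GraphProduct Γ Gv) : ret S (ret T x) = ret (S ∩ T) x := by
  suffices (ret S).comp (ret T) = ret (Γ := Γ) (Gv := Gv) (S ∩ T) from DFunLike.congr_fun this x
  refine hom_ext fun v a => ?_
  by_cases hT : v ∈ T <;> by_cases hS : v ∈ S <;>
    simp [ret, lift_of, hS, hT]

end Retraction

section LinkPower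

variable (Γ Gv) (v : V)

/-- The left cosets of the full subgroup on the link of `v`; they index the conjugates of the
vertex group of `v`. -/
abbrev LinkCoset : Type := GraphProduct Γ Gv ⧸ full Γ Gv (Γ.neighborSet v)

/-- The free product of copies of the vertex group of `v`, one for each coset of the link
subgroup. -/
abbrev LinkPower : Type := FreePower (LinkCoset Γ Gv v) (Gv v)

/-- The semidirect product in which the splitting of the retraction onto `full {v}ᶜ` is realised.
The acting group is the whole graph product, rather than `full {v}ᶜ`, so that its elements need no
coercions. -/
abbrev LinkSemidirect : Type :=
  LinkPower Γ Gv v ⋊[MulDistribMulAction.toMulAut (GraphProduct Γ Gv) (LinkPower Γ Gv v)]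
    GraphProduct Γ Gv

open scoped Classical in
/-- The vertex maps of `toLinkSemidirect`. -/
noncomputable def vertexToLinkSemidirect (u : V) : Gv u →* LinkSemidirect Γ Gv v :=
  Function.update (fun u => SemidirectProduct.inr.comp (of Γ Gv u)) v
    (SemidirectProduct.inl.comp (FreePower.of ((1 : GraphProduct Γ Gv) : LinkCoset Γ Gv v))) u

variable {Γ Gv v}

theorem vertexToLinkSemidirect_self (a : Gv v) :
    vertexToLinkSemidirect Γ Gv v v a =
      SemidirectProduct.inl (FreePower.of ((1 : GraphProduct Γ Gv) : LinkCoset Γ Gv v) a) := by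
  simp [vertexToLinkSemidirect]

theorem vertexToLinkSemidirect_of_ne {u : V} (h : u ≠ v) (a : Gv u) :
    vertexToLinkSemidirect Γ Gv v u a = SemidirectProduct.inr (of Γ Gv u a) := by
  simp [vertexToLinkSemidirect, h]

theorem inl_smul (g : GraphProduct Γ Gv) (w : LinkPower Γ Gv v) :
    (SemidirectProduct.inl (g • w) : LinkSemidirect Γ Gv v) =
      SemidirectProduct.inr g * SemidirectProduct.inl w * (SemidirectProduct.inr g)⁻¹ := by
  rw [← map_inv]
  exact SemidirectProduct.inl_aut g w

theorem commute_inr_inl_iff {g : GraphProduct Γ Gv} {w : LinkPower Γ Gv v} :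
    Commute (SemidirectProduct.inr g : LinkSemidirect Γ Gv v) (SemidirectProduct.inl w) ↔
      g • w = w := by
  rw [commute_iff_eq, ← mul_inv_eq_iff_eq_mul, ← inl_smul, SemidirectProduct.inl_inj]

theorem commute_vertexToLinkSemidirect_self {u : V} (h : Γ.Adj v u) (a : Gv u) (b : Gv v) :
    Commute (vertexToLinkSemidirect Γ Gv v u a) (vertexToLinkSemidirect Γ Gv v v b) := by
  rw [vertexToLinkSemidirect_self, vertexToLinkSemidirect_of_ne h.ne', commute_inr_inl_iff,
    FreePower.smul_of]
  have fixes_base : of Γ Gv u a ∈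
      MulAction.stabilizer (GraphProduct Γ Gv) ((1 : GraphProduct Γ Gv) : LinkCoset Γ Gv v) := by
    rw [MulAction.stabilizer_quotient]
    exact of_mem_full h a
  rw [MulAction.mem_stabilizer_iff.1 fixes_base]

variable (Γ Gv v)

/-- The homomorphism sending the vertex group of `v` to the copy indexed by the trivial coset and
every other vertex group to the acting factor. -/
noncomputable def toLinkSemidirect : GraphProduct Γ Gv →* LinkSemidirect Γ Gv v :=
  lift (vertexToLinkSemidirect Γ Gv v) fun u u' h a b => by
    by_cases hu : u = v
    · subst hu
      exact (commute_vertexToLinkSemidirect_self h b a).symm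
    by_cases hu' : u' = v
    · subst hu'
      exact commute_vertexToLinkSemidirect_self h.symm a b
    rw [vertexToLinkSemidirect_of_ne hu, vertexToLinkSemidirect_of_ne hu']
    exact (commute_of h a b).map SemidirectProduct.inr

variable {Γ Gv v}

theorem toLinkSemidirect_of_self (a : Gv v) :
    toLinkSemidirect Γ Gv v (of Γ Gv v a) =
      SemidirectProduct.inl (FreePower.of ((1 : GraphProduct Γ Gv) : LinkCoset Γ Gv v) a) :=
  (lift_of _ _ v a).trans (vertexToLinkSemidirect_self a)

theorem toLinkSemidirect_of_of_ne {u : V} (h : u ≠ v) (a : Gv u) :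
    toLinkSemidirect Γ Gv v (of Γ Gv u a) = SemidirectProduct.inr (of Γ Gv u a) :=
  (lift_of _ _ u a).trans (vertexToLinkSemidirect_of_ne h a)

theorem commute_of_mem_full_neighborSet {x : GraphProduct Γ Gv}
    (hx : x ∈ full Γ Gv (Γ.neighborSet v)) (a : Gv v) : Commute x (of Γ Gv v a) := by
  have le_centralizer : full Γ Gv (Γ.neighborSet v) ≤ Subgroup.centralizer {of Γ Gv v a} :=
    full_le fun u hu b =>
      Subgroup.mem_centralizer_singleton_iff.2 (commute_of (Γ.adj_symm hu) b a)
  exact Subgroup.mem_centralizer_singleton_iff.1 (le_centralizer hx)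

/-- The homomorphism sending the copy of the vertex group of `v` indexed by the coset of `p` to
the conjugate of that vertex group by `p`. -/
def conjHom : LinkPower Γ Gv v →* GraphProduct Γ Gv :=
  CoprodI.lift fun i => Quotient.liftOn' i
    (fun p => (MulAut.conj p).toMonoidHom.comp (of Γ Gv v)) fun p q hpq => by
      ext a
      have hcomm := commute_of_mem_full_neighborSet (QuotientGroup.leftRel_apply.1 hpq) a
      simp only [MonoidHom.comp_apply, MulEquiv.coe_toMonoidHom, MulAut.conj_apply]
      calc p * of Γ Gv v a * p⁻¹
          = p * (of Γ Gv v a * (p⁻¹ * q)) * q⁻¹ := by group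
        _ = q * of Γ Gv v a * q⁻¹ := by rw [← hcomm.eq]; group

theorem conjHom_of (p : GraphProduct Γ Gv) (a : Gv v) :
    conjHom (FreePower.of (p : LinkCoset Γ Gv v) a) = p * of Γ Gv v a * p⁻¹ :=
  CoprodI.lift_of (M := fun _ : LinkCoset Γ Gv v => Gv v) _ a

theorem conjHom_smul (g : GraphProduct Γ Gv) (w : LinkPower Γ Gv v) :
    conjHom (g • w) = g * conjHom w * g⁻¹ := by
  suffices conjHom.comp (MulDistribMulAction.toMonoidHom (LinkPower Γ Gv v) g) =
      (MulAut.conj g).toMonoidHom.comp conjHom from DFunLike.congr_fun this w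
  refine CoprodI.ext_hom _ _ fun i => MonoidHom.ext fun a => ?_
  induction i using QuotientGroup.induction_on with | H p => ?_
  change conjHom (g • FreePower.of (p : LinkCoset Γ Gv v) a) = g * conjHom (FreePower.of _ a) * g⁻¹
  rw [FreePower.smul_of, MulAction.Quotient.smul_coe, conjHom_of, conjHom_of, smul_eq_mul]
  group

/-- The left inverse of `toLinkSemidirect`. -/
def ofLinkSemidirect : LinkSemidirect Γ Gv v →* GraphProduct Γ Gv :=
  SemidirectProduct.lift conjHom (MonoidHom.id _) fun g => MonoidHom.ext (conjHom_smul g)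

theorem ofLinkSemidirect_toLinkSemidirect (x : GraphProduct Γ Gv) :
    ofLinkSemidirect (toLinkSemidirect Γ Gv v x) = x := by
  suffices ofLinkSemidirect.comp (toLinkSemidirect Γ Gv v) = MonoidHom.id _ from
    DFunLike.congr_fun this x
  refine hom_ext fun u a => ?_
  by_cases hu : u = v
  · subst hu
    simp [toLinkSemidirect_of_self, ofLinkSemidirect, conjHom_of]
  · simp [toLinkSemidirect_of_of_ne hu, ofLinkSemidirect]

theorem toLinkSemidirect_injective : Function.Injective (toLinkSemidirect Γ Gv v) :=
  Function.LeftInverse.injective ofLinkSemidirect_toLinkSemidirect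

theorem toLinkSemidirect_of_mem {x : GraphProduct Γ Gv} (hx : x ∈ full Γ Gv {v}ᶜ) :
    toLinkSemidirect Γ Gv v x = SemidirectProduct.inr x := by
  have le_eqLocus : full Γ Gv {v}ᶜ ≤ (toLinkSemidirect Γ Gv v).eqLocus SemidirectProduct.inr :=
    full_le fun _ hu a => toLinkSemidirect_of_of_ne hu a
  exact le_eqLocus hx

theorem right_toLinkSemidirect (x : GraphProduct Γ Gv) :
    (toLinkSemidirect Γ Gv v x).right = ret {v}ᶜ x := by
  suffices SemidirectProduct.rightHom.comp (toLinkSemidirect Γ Gv v) = ret {v}ᶜ from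
    DFunLike.congr_fun this x
  refine hom_ext fun u a => ?_
  by_cases hu : u = v
  · subst hu
    rw [MonoidHom.comp_apply, toLinkSemidirect_of_self, SemidirectProduct.rightHom_inl,
      ret_of_notMem (by simp)]
  · rw [MonoidHom.comp_apply, toLinkSemidirect_of_of_ne hu, SemidirectProduct.rightHom_inr,
      ret_of_mem (by simpa using hu)]

theorem left_toLinkSemidirect_mem_supportedOn {S : Set V} {x : GraphProduct Γ Gv}
    (hx : x ∈ full Γ Gv S) :
    (toLinkSemidirect Γ Gv v x).left ∈
      FreePower.supportedOn ((↑) '' (full Γ Gv (S \ {v}) : Set (GraphProduct Γ Gv))) := by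
  induction hx using full_induction with
  | of u _ a =>
    by_cases huv : u = v
    · subst huv
      rw [toLinkSemidirect_of_self]
      exact FreePower.of_mem_supportedOn (Set.mem_image_of_mem _ (one_mem _)) a
    · rw [toLinkSemidirect_of_of_ne huv]
      exact one_mem _
  | one =>
    rw [map_one]
    exact one_mem _
  | mul x y hx _ ihx ihy =>
    have ret_mem : ret {v}ᶜ x ∈ full Γ Gv (S \ {v}) := by
      rw [Set.sdiff_eq, Set.inter_comm]
      exact ret_mem_full_inter _ hx
    rw [map_mul, SemidirectProduct.mul_left, right_toLinkSemidirect]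
    refine mul_mem ihx (FreePower.smul_mem_supportedOn ?_ ihy)
    rintro _ ⟨p, hp, rfl⟩
    exact ⟨ret {v}ᶜ x * p, mul_mem ret_mem hp, rfl⟩

theorem commute_iff_forall_smul_eq {x k : GraphProduct Γ Gv} (hx : x ∈ full Γ Gv {v}ᶜ)
    (hk : ret {v}ᶜ k = 1) :
    Commute x k ↔ ∀ i ∈ (toLinkSemidirect Γ Gv v k).left.support, x • i = i := by
  have image_eq_inl : toLinkSemidirect Γ Gv v k =
      SemidirectProduct.inl (toLinkSemidirect Γ Gv v k).left := by
    ext1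
    · rfl
    · rw [right_toLinkSemidirect, hk, SemidirectProduct.right_inl]
  rw [← commute_map_iff toLinkSemidirect_injective, toLinkSemidirect_of_mem hx, image_eq_inl,
    commute_inr_inl_iff]
  exact FreePower.smul_eq_self_iff x _

theorem stabilizer_linkCoset (p : GraphProduct Γ Gv) :
    MulAction.stabilizer (GraphProduct Γ Gv) (p : LinkCoset Γ Gv v) =
      MulAut.conj p • full Γ Gv (Γ.neighborSet v) := by
  have smul_one : (p : LinkCoset Γ Gv v) = p • ((1 : GraphProduct Γ Gv) : LinkCoset Γ Gv v) := by
    rw [MulAction.Quotient.smul_coe, smul_eq_mul, mul_one]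
  rw [smul_one, MulAction.stabilizer_smul_eq_stabilizer_map_conj, MulAction.stabilizer_quotient]
  rfl

end LinkPower

section Intersection

theorem exists_finset_inf_centralizer_eq {S : Set V} {v : V} {k : GraphProduct Γ Gv}
    (hk : k ∈ full Γ Gv S) (ret_k : ret {v}ᶜ k = 1) :
    ∃ F : Finset (GraphProduct Γ Gv), (∀ p ∈ F, p ∈ full Γ Gv (S \ {v})) ∧
      full Γ Gv {v}ᶜ ⊓ Subgroup.centralizer {k} =
        full Γ Gv {v}ᶜ ⊓ F.inf fun p => MulAut.conj p • full Γ Gv (Γ.neighborSet v) := by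
  classical
  obtain ⟨F, hF, image_F⟩ := Finset.subset_set_image_iff.1 <|
    FreePower.support_subset_of_mem_supportedOn (left_toLinkSemidirect_mem_supportedOn (v := v) hk)
  refine ⟨F, hF, Subgroup.ext fun x => and_congr_right fun hx => ?_⟩
  calc x ∈ Subgroup.centralizer {k} ↔ Commute x k := Subgroup.mem_centralizer_singleton_iff
    _ ↔ ∀ p ∈ F, x • (p : LinkCoset Γ Gv v) = p := by
      rw [commute_iff_forall_smul_eq hx ret_k, ← image_F, Finset.forall_mem_image]
    _ ↔ x ∈ F.inf fun p => MulAut.conj p • full Γ Gv (Γ.neighborSet v) := by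
      simp only [Finset.inf_eq_iInf, Subgroup.mem_iInf, ← stabilizer_linkCoset,
        MulAction.mem_stabilizer_iff]

/-- `H` is a conjugate, by an element of `K`, of the full subgroup on a subset of `T`. -/
def IsParabolic (T : Set V) (K H : Subgroup (GraphProduct Γ Gv)) : Prop :=
  ∃ P ⊆ T, ∃ h ∈ K, H = MulAut.conj h • full Γ Gv P

theorem isParabolic_full (T : Set V) (K : Subgroup (GraphProduct Γ Gv)) :
    IsParabolic T K (full Γ Gv T) :=
  ⟨T, subset_rfl, 1, one_mem K, by rw [map_one, one_smul]⟩

theorem IsParabolic.mono {T T' : Set V} {K K' H : Subgroup (GraphProduct Γ Gv)}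
    (hH : IsParabolic T K H) (hT : T ⊆ T') (hK : K ≤ K') : IsParabolic T' K' H := by
  obtain ⟨P, hP, h, hh, rfl⟩ := hH
  exact ⟨P, hP.trans hT, h, hK hh, rfl⟩

theorem IsParabolic.conj_smul {T : Set V} {K H : Subgroup (GraphProduct Γ Gv)}
    (hH : IsParabolic T K H) {h : GraphProduct Γ Gv} (hh : h ∈ K) :
    IsParabolic T K (MulAut.conj h • H) := by
  obtain ⟨P, hP, h', hh', rfl⟩ := hH
  exact ⟨P, hP, h * h', mul_mem hh hh', by rw [map_mul, mul_smul]⟩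

/-- Conjugates of full subgroups by elements of `full S` meet full subgroups in parabolic
subgroups. Only `g` is confined to `S`, so that the induction on `S` may vary `U` and `W`. -/
def ConjInterParabolic (Γ : SimpleGraph V) (Gv : V → Type) [∀ v, Group (Gv v)] (S : Set V) : Prop :=
  ∀ g ∈ full Γ Gv S, ∀ U W : Set V,
    IsParabolic (U ∩ W) (full Γ Gv (W ∩ S)) (MulAut.conj g • full Γ Gv U ⊓ full Γ Gv W)

theorem ConjInterParabolic.inf_conj_smul {S T : Set V} (hS : ConjInterParabolic Γ Gv S)
    {H : Subgroup (GraphProduct Γ Gv)} (hH : IsParabolic T (full Γ Gv (T ∩ S)) H)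
    {p : GraphProduct Γ Gv} (hp : p ∈ full Γ Gv S) (L : Set V) :
    IsParabolic T (full Γ Gv (T ∩ S)) (H ⊓ MulAut.conj p • full Γ Gv L) := by
  obtain ⟨P, hP, h, hh, rfl⟩ := hH
  have mem_S : h⁻¹ * p ∈ full Γ Gv S :=
    mul_mem (inv_mem (full_mono Set.inter_subset_right hh)) hp
  have conj_inf : MulAut.conj h • full Γ Gv P ⊓ MulAut.conj p • full Γ Gv L =
      MulAut.conj h • (MulAut.conj (h⁻¹ * p) • full Γ Gv L ⊓ full Γ Gv P) := by
    rw [Subgroup.smul_inf, ← mul_smul, ← map_mul, mul_inv_cancel_left, inf_comm]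
  rw [conj_inf]
  refine IsParabolic.conj_smul ?_ hh
  exact (hS _ mem_S L P).mono (Set.inter_subset_right.trans hP)
    (full_mono (Set.inter_subset_inter_left S hP))

theorem ConjInterParabolic.inf_finset_inf_conj_smul {S T : Set V} (hS : ConjInterParabolic Γ Gv S)
    {H : Subgroup (GraphProduct Γ Gv)} (hH : IsParabolic T (full Γ Gv (T ∩ S)) H) (L : Set V)
    {F : Finset (GraphProduct Γ Gv)} (hF : ∀ p ∈ F, p ∈ full Γ Gv S) :
    IsParabolic T (full Γ Gv (T ∩ S)) (H ⊓ F.inf fun p => MulAut.conj p • full Γ Gv L) := by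
  classical
  induction F using Finset.induction_on with
  | empty => rwa [Finset.inf_empty, inf_top_eq]
  | insert p F _ ih =>
    rw [Finset.forall_mem_insert] at hF
    rw [Finset.inf_insert, inf_left_comm, inf_comm]
    exact hS.inf_conj_smul (ih hF.2) hF.1 L

theorem conj_smul_full_inf_full_eq {U W : Set V} {k : GraphProduct Γ Gv} (hU : ret U k = 1)
    (hW : ret W k = 1) :
    MulAut.conj k • full Γ Gv U ⊓ full Γ Gv W =
      full Γ Gv (U ∩ W) ⊓ Subgroup.centralizer {k} := by
  ext x
  simp only [Subgroup.mem_inf, Subgroup.mem_centralizer_singleton_iff]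
  constructor
  · rintro ⟨⟨y, hy, rfl⟩, hxW⟩
    change k * y * k⁻¹ ∈ full Γ Gv W at hxW
    change k * y * k⁻¹ ∈ full Γ Gv (U ∩ W) ∧ Commute (k * y * k⁻¹) k
    have ret_W : ret W y = k * y * k⁻¹ := by
      rw [← ret_eq_self hxW]
      simp [hW]
    have mem_inter : k * y * k⁻¹ ∈ full Γ Gv (U ∩ W) := by
      rw [← ret_W, Set.inter_comm]
      exact ret_mem_full_inter W hy
    have conj_eq : k * y * k⁻¹ = y := calc
      k * y * k⁻¹ = ret U (k * y * k⁻¹) :=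
        (ret_eq_self (full_mono Set.inter_subset_left mem_inter)).symm
      _ = y := by simp [hU, ret_eq_self hy]
    exact ⟨mem_inter, by rw [conj_eq]; exact (mul_inv_eq_iff_eq_mul.1 conj_eq).symm⟩
  · rintro ⟨hx, hcomm⟩
    refine ⟨⟨x, full_mono Set.inter_subset_left hx, ?_⟩, full_mono Set.inter_subset_right hx⟩
    exact mul_inv_eq_iff_eq_mul.2 hcomm.symm

theorem full_inf_centralizer_eq {T : Set V} {v : V} (hv : v ∉ T) (k : GraphProduct Γ Gv) :
    full Γ Gv T ⊓ Subgroup.centralizer {k} =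
      full Γ Gv T ⊓ Subgroup.centralizer {ret {v}ᶜ k} ⊓
        Subgroup.centralizer {k * (ret {v}ᶜ k)⁻¹} := by
  ext x
  simp only [Subgroup.mem_inf, Subgroup.mem_centralizer_singleton_iff, and_assoc]
  refine and_congr_right fun hx => ?_
  have ret_x : ret {v}ᶜ x = x :=
    ret_eq_self (full_mono (Set.subset_compl_singleton_iff.2 hv) hx)
  refine ⟨fun hk => ?_, fun ⟨hret, hquot⟩ => ?_⟩
  · have hret : Commute x (ret {v}ᶜ k) := by
      simpa only [ret_x] using Commute.map (show Commute x k from hk) (ret {v}ᶜ)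
    exact ⟨hret, Commute.mul_right hk hret.inv_right⟩
  · have hk : Commute x (k * (ret {v}ᶜ k)⁻¹ * ret {v}ᶜ k) := Commute.mul_right hquot hret
    rwa [inv_mul_cancel_right] at hk

theorem ConjInterParabolic.full_inf_centralizer {S T : Set V} {v : V}
    (hS : ConjInterParabolic Γ Gv (S \ {v})) (hv : v ∉ T) {k : GraphProduct Γ Gv}
    (hk : k ∈ full Γ Gv S) (hT : ret T k = 1) :
    IsParabolic T (full Γ Gv (T ∩ (S \ {v}))) (full Γ Gv T ⊓ Subgroup.centralizer {k}) := by
  have subset_compl : T ⊆ {v}ᶜ := Set.subset_compl_singleton_iff.2 hv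
  set k₁ := ret {v}ᶜ k
  have k₁_mem : k₁ ∈ full Γ Gv (S \ {v}) := by
    rw [Set.sdiff_eq, Set.inter_comm]
    exact ret_mem_full_inter _ hk
  have ret_k₁ : ret T k₁ = 1 := by
    rw [ret_ret, Set.inter_eq_left.2 subset_compl, hT]
  have ret_quot : ret {v}ᶜ (k * k₁⁻¹) = 1 := by
    rw [map_mul, map_inv, ret_ret, Set.inter_self, mul_inv_cancel]
  have quot_mem : k * k₁⁻¹ ∈ full Γ Gv S :=
    mul_mem hk (inv_mem (full_mono Set.sdiff_subset k₁_mem))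
  obtain ⟨F, hF, centralizer_eq⟩ := exists_finset_inf_centralizer_eq quot_mem ret_quot
  have parabolic_k₁ : IsParabolic T (full Γ Gv (T ∩ (S \ {v})))
      (full Γ Gv T ⊓ Subgroup.centralizer {k₁}) := by
    simpa only [conj_smul_full_inf_full_eq ret_k₁ ret_k₁, Set.inter_self] using hS k₁ k₁_mem T T
  convert hS.inf_finset_inf_conj_smul parabolic_k₁ (Γ.neighborSet v) hF using 1
  calc full Γ Gv T ⊓ Subgroup.centralizer {k}
      = full Γ Gv T ⊓ Subgroup.centralizer {k₁} ⊓
          (full Γ Gv {v}ᶜ ⊓ Subgroup.centralizer {k * k₁⁻¹}) := by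
        rw [full_inf_centralizer_eq hv, ← inf_assoc, inf_right_comm _ _ (full Γ Gv {v}ᶜ),
          inf_eq_left.2 (full_mono subset_compl)]
    _ = full Γ Gv T ⊓ Subgroup.centralizer {k₁} ⊓
          F.inf fun p => MulAut.conj p • full Γ Gv (Γ.neighborSet v) := by
        rw [centralizer_eq, ← inf_assoc, inf_right_comm _ _ (full Γ Gv {v}ᶜ),
          inf_eq_left.2 (full_mono subset_compl)]

theorem isParabolic_full_inf_centralizer {S T : Set V}
    (hS : ∀ v ∈ S, ConjInterParabolic Γ Gv (S \ {v})) {k : GraphProduct Γ Gv}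
    (hk : k ∈ full Γ Gv S) (hT : ret T k = 1) :
    IsParabolic T (full Γ Gv (T ∩ S)) (full Γ Gv T ⊓ Subgroup.centralizer {k}) := by
  by_cases hST : S ⊆ T
  · have k_eq_one : k = 1 := (ret_eq_self (full_mono hST hk)).symm.trans hT
    have centralizer_eq_top : Subgroup.centralizer {k} = ⊤ := by
      rw [k_eq_one]
      simp
    rw [centralizer_eq_top, inf_top_eq]
    exact isParabolic_full T _
  · obtain ⟨v, hvS, hvT⟩ := Set.not_subset.1 hST
    exact ((hS v hvS).full_inf_centralizer hvT hk hT).mono subset_rfl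
      (full_mono (Set.inter_subset_inter_right T Set.sdiff_subset))

theorem exists_eq_mul_mul_of_mem_full (U W : Set V) {S : Set V} {g : GraphProduct Γ Gv}
    (hg : g ∈ full Γ Gv S) :
    ∃ h ∈ full Γ Gv (W ∩ S), ∃ k ∈ full Γ Gv S, ∃ r ∈ full Γ Gv U,
      g = h * k * r ∧ ret U k = 1 ∧ ret W k = 1 := by
  set g' := (ret W g)⁻¹ * g with g'_def
  have ret_W : ret W g' = 1 := by simp [g'_def, ret_ret]
  have ret_W_ret_U : ret W (ret U g') = 1 := by
    rw [ret_ret, Set.inter_comm, ← ret_ret, ret_W, map_one]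
  have h_mem := ret_mem_full_inter W hg
  have g'_mem : g' ∈ full Γ Gv S :=
    mul_mem (inv_mem (full_mono Set.inter_subset_right h_mem)) hg
  have r_mem := ret_mem_full_inter U g'_mem
  refine ⟨ret W g, h_mem, g' * (ret U g')⁻¹,
    mul_mem g'_mem (inv_mem (full_mono Set.inter_subset_right r_mem)), ret U g',
    full_mono Set.inter_subset_left r_mem, ?_, ?_, ?_⟩
  · rw [g'_def]
    group
  · simp [ret_ret]
  · simp [ret_W, ret_W_ret_U]

theorem conjInterParabolic_of_forall_sdiff_singleton {S : Set V}
    (hS : ∀ v ∈ S, ConjInterParabolic Γ Gv (S \ {v})) : ConjInterParabolic Γ Gv S := by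
  intro g hg U W
  obtain ⟨h, hh, k, hk, r, hr, rfl, hU, hW⟩ := exists_eq_mul_mul_of_mem_full U W hg
  have ret_inter : ret (U ∩ W) k = 1 := by rw [← ret_ret, hW, map_one]
  have conj_inf : MulAut.conj (h * k * r) • full Γ Gv U ⊓ full Γ Gv W =
      MulAut.conj h • (full Γ Gv (U ∩ W) ⊓ Subgroup.centralizer {k}) := by
    rw [← conj_smul_full_inf_full_eq hU hW, Subgroup.smul_inf,
      Subgroup.conj_smul_eq_self_of_mem (full_mono Set.inter_subset_left hh), map_mul, map_mul,
      mul_smul, mul_smul, Subgroup.conj_smul_eq_self_of_mem hr]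
  rw [conj_inf]
  refine IsParabolic.conj_smul ?_ hh
  exact (isParabolic_full_inf_centralizer hS hk ret_inter).mono subset_rfl
    (full_mono (Set.inter_subset_inter_left S Set.inter_subset_right))

theorem conjInterParabolic_coe (S : Finset V) : ConjInterParabolic Γ Gv (S : Set V) := by
  classical
  induction S using Finset.strongInduction with
  | H S ih =>
    refine conjInterParabolic_of_forall_sdiff_singleton fun v hv => ?_
    rw [← Finset.coe_erase]
    exact ih _ (Finset.erase_ssubset hv)

end Intersection

end GraphProduct

theorem conj_full_inter_full_general {V : Type} (Γ : SimpleGraph V) (Gv : V → Type)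
    [∀ v, Group (Gv v)] (U W : Set V) (g : GraphProduct Γ Gv) :
    ∃ P ⊆ U ∩ W, ∃ h ∈ GraphProduct.full Γ Gv W,
      conjSubgroup g (GraphProduct.full Γ Gv U) ⊓ GraphProduct.full Γ Gv W =
        conjSubgroup h (GraphProduct.full Γ Gv P) := by
  obtain ⟨S, hg⟩ := GraphProduct.exists_finset_mem_full g
  exact (GraphProduct.conjInterParabolic_coe S g hg U W).mono subset_rfl
    (GraphProduct.full_mono Set.inter_subset_left)

/-- In a graph product, the intersection of a conjugate of a full subgroup with a full
subgroup is a conjugate, by an element of the second, of a full subgroup on a subset of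
the intersection of the vertex sets. -/
theorem conj_full_inter_full {V : Type} [Fintype V] (Γ : SimpleGraph V) (Gv : V → Type)
    [∀ v, Group (Gv v)] (U W : Set V) (g : GraphProduct Γ Gv) :
    ∃ P ⊆ U ∩ W, ∃ h ∈ GraphProduct.full Γ Gv W,
      conjSubgroup g (GraphProduct.full Γ Gv U) ⊓ GraphProduct.full Γ Gv W =
        conjSubgroup h (GraphProduct.full Γ Gv P) :=
  conj_full_inter_full_general Γ Gv U W g
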